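/- Let U be a unitary N×N complex matrix, let L₀ be a nonzero Hermitian N×N complex matrix, let D ≥ 1 be a natural number, and let λ be a real number with 0 < λ. Suppose that for every natural number d with 0 ≤ d ≤ D the memory condition Re Tr(Uᵈ · L₀ · (U†)ᵈ · L₀) ≥ λ · ‖L₀‖_F² holds. Then the Cesàro average L_D := (1/(D+1)) · Σ_{d=0}^{D} Uᵈ · L₀ · (U†)ᵈ is nonzero and satisfies the imprecision bound ‖U·L_D − L_D·U‖_F / (2·‖L_D‖_F) ≤ 1/(√λ · D). -/

import Mathlib

open Matrix BigOperators

/-- Frobenius norm of a square complex matrix: `‖A‖_F = √(Tr(A†A))`. -/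
noncomputable def frobNorm {n : Type*} [Fintype n] (A : Matrix n n ℂ) : ℝ :=
  Real.sqrt (Matrix.trace (Aᴴ * A)).re

/-- Cesàro average `L_D = (1/(D+1)) ∑_{d=0}^{D} Uᵈ L₀ (U†)ᵈ`. -/
noncomputable def cesaroAvg {N : ℕ} (U L₀ : Matrix (Fin N) (Fin N) ℂ) (D : ℕ) :
    Matrix (Fin N) (Fin N) ℂ :=
  ((D : ℂ) + 1)⁻¹ • ∑ d ∈ Finset.range (D + 1), U ^ d * L₀ * (Uᴴ) ^ d

namespace CesaroAux

variable {N : ℕ}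

/-- squared Frobenius norm -/
noncomputable def F (A : Matrix (Fin N) (Fin N) ℂ) : ℝ := (Matrix.trace (Aᴴ * A)).re

open scoped ComplexOrder in
lemma F_nonneg (A : Matrix (Fin N) (Fin N) ℂ) : 0 ≤ F A :=
  (Complex.le_def.mp (Matrix.posSemidef_conjTranspose_mul_self A).trace_nonneg).1

open scoped ComplexOrder in
lemma F_pos (A : Matrix (Fin N) (Fin N) ℂ) (h : A ≠ 0) : 0 < F A := by
  have h0 := (Matrix.posSemidef_conjTranspose_mul_self A).trace_nonneg
  rcases (F_nonneg A).lt_or_eq with h1 | h1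
  · exact h1
  · exfalso
    apply h
    apply Matrix.trace_conjTranspose_mul_self_eq_zero_iff.mp
    apply Complex.ext
    · exact h1.symm
    · exact (Complex.le_def.mp h0).2.symm

lemma F_sub_le (A B : Matrix (Fin N) (Fin N) ℂ) : F (A - B) ≤ 2 * F A + 2 * F B := by
  have h : F (A - B) + F (A + B) = 2 * F A + 2 * F B := by
    unfold F
    simp only [Matrix.conjTranspose_sub, Matrix.conjTranspose_add, sub_mul, mul_sub, add_mul,
      mul_add, Matrix.trace_add, Matrix.trace_sub, Complex.add_re, Complex.sub_re]
    ring
  linarith [F_nonneg (A + B)]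

lemma F_smul (r : ℝ) (A : Matrix (Fin N) (Fin N) ℂ) : F ((r : ℂ) • A) = r ^ 2 * F A := by
  unfold F
  simp [Matrix.conjTranspose_smul, Matrix.trace_smul]
  ring

lemma F_mul_unitary (U A : Matrix (Fin N) (Fin N) ℂ) (hU' : U * Uᴴ = 1) : F (A * U) = F A := by
  unfold F
  rw [Matrix.conjTranspose_mul, Matrix.mul_assoc, Matrix.trace_mul_comm]
  rw [Matrix.mul_assoc, Matrix.mul_assoc, hU', Matrix.mul_one]

/-- conjugated matrix -/
noncomputable def M (U L : Matrix (Fin N) (Fin N) ℂ) (d : ℕ) : Matrix (Fin N) (Fin N) ℂ :=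
  U ^ d * L * Uᴴ ^ d

lemma M_herm (U L : Matrix (Fin N) (Fin N) ℂ) (hL : L.IsHermitian) (d : ℕ) :
    (M U L d)ᴴ = M U L d := by
  unfold M
  simp [Matrix.conjTranspose_mul, Matrix.conjTranspose_pow, hL.eq, Matrix.mul_assoc]

lemma M_succ (U L : Matrix (Fin N) (Fin N) ℂ) (d : ℕ) :
    M U L (d + 1) = U * M U L d * Uᴴ := by
  unfold M
  rw [pow_succ', pow_succ]
  simp only [Matrix.mul_assoc]

lemma tr_M_succ (U L : Matrix (Fin N) (Fin N) ℂ) (hU : Uᴴ * U = 1) (d e : ℕ) :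
    (M U L (d + 1) * M U L (e + 1)).trace = (M U L d * M U L e).trace := by
  rw [M_succ, M_succ]
  have : U * M U L d * Uᴴ * (U * M U L e * Uᴴ) = U * (M U L d * M U L e * Uᴴ) := by
    calc _ = U * M U L d * (Uᴴ * U) * (M U L e * Uᴴ) := by simp only [Matrix.mul_assoc]
      _ = _ := by rw [hU]; simp only [Matrix.mul_assoc, Matrix.one_mul]
  rw [this, Matrix.trace_mul_comm, Matrix.mul_assoc, hU, Matrix.mul_one]

lemma tr_M_add (U L : Matrix (Fin N) (Fin N) ℂ) (hU : Uᴴ * U = 1) (k e : ℕ) :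
    (M U L (k + e) * M U L e).trace = (M U L k * L).trace := by
  induction e with
  | zero => simp [M]
  | succ e ih => rw [← add_assoc, tr_M_succ U L hU, ih]

lemma tr_ge (U L : Matrix (Fin N) (Fin N) ℂ) (hU : Uᴴ * U = 1) (D : ℕ) (c : ℝ)
    (h : ∀ d ≤ D, c ≤ (M U L d * L).trace.re) (d e : ℕ) (hd : d ≤ D) (he : e ≤ D) :
    c ≤ (M U L d * M U L e).trace.re := by
  rcases le_total e d with hle | hle
  · obtain ⟨k, rfl⟩ := Nat.exists_eq_add_of_le' hle
    rw [tr_M_add U L hU]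
    exact h k (by omega)
  · obtain ⟨k, rfl⟩ := Nat.exists_eq_add_of_le' hle
    rw [Matrix.trace_mul_comm, tr_M_add U L hU]
    exact h k (by omega)

lemma F_sum_ge (U L : Matrix (Fin N) (Fin N) ℂ) (hU : Uᴴ * U = 1) (hL : L.IsHermitian)
    (D : ℕ) (c : ℝ) (h : ∀ d ≤ D, c ≤ (M U L d * L).trace.re) :
    ((D : ℝ) + 1) ^ 2 * c ≤ F (∑ d ∈ Finset.range (D + 1), M U L d) := by
  unfold F
  rw [Matrix.conjTranspose_sum, Finset.sum_mul_sum, Matrix.trace_sum, Complex.re_sum]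
  have : ((D : ℝ) + 1) ^ 2 * c
      = ∑ d ∈ Finset.range (D + 1), ∑ e ∈ Finset.range (D + 1), c := by
    simp; ring
  rw [this]
  refine Finset.sum_le_sum fun d hd => ?_
  rw [Matrix.trace_sum, Complex.re_sum]
  refine Finset.sum_le_sum fun e he => ?_
  rw [M_herm U L hL]
  rw [Finset.mem_range] at hd he
  exact tr_ge U L hU D c h d e (by omega) (by omega)

lemma F_M (U L : Matrix (Fin N) (Fin N) ℂ) (hU : Uᴴ * U = 1) (hL : L.IsHermitian) (d : ℕ) :
    F (M U L d) = F L := by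
  unfold F
  have := tr_M_add U L hU 0 d
  rw [zero_add] at this
  rw [M_herm U L hL, this, hL.eq]
  simp [M]

lemma comm_sum (U L : Matrix (Fin N) (Fin N) ℂ) (hU : Uᴴ * U = 1) (D : ℕ) :
    U * (∑ d ∈ Finset.range (D + 1), M U L d) - (∑ d ∈ Finset.range (D + 1), M U L d) * U
      = (M U L (D + 1) - M U L 0) * U := by
  rw [← Finset.sum_range_sub, Finset.mul_sum, Finset.sum_mul, Finset.sum_mul,
    ← Finset.sum_sub_distrib]
  refine Finset.sum_congr rfl fun d _ => ?_
  rw [sub_mul, M_succ, Matrix.mul_assoc (U * _), hU, Matrix.mul_one]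

end CesaroAux

open CesaroAux in
theorem cesaro_average_imprecision_bound {N : ℕ}
    (U L₀ : Matrix (Fin N) (Fin N) ℂ)
    (hU : Uᴴ * U = 1) (hHerm : L₀.IsHermitian) (hL₀ : L₀ ≠ 0)
    (D : ℕ) (hD : 1 ≤ D) (lam : ℝ) (hlam : 0 < lam)
    (hmem : ∀ d : ℕ, d ≤ D →
      lam * (frobNorm L₀) ^ 2 ≤ (Matrix.trace (U ^ d * L₀ * (Uᴴ) ^ d * L₀)).re) :
    cesaroAvg U L₀ D ≠ 0 ∧
      frobNorm (U * cesaroAvg U L₀ D - cesaroAvg U L₀ D * U) /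
          (2 * frobNorm (cesaroAvg U L₀ D)) ≤ 1 / (Real.sqrt lam * D) := by
  have hU' : U * Uᴴ = 1 := mul_eq_one_comm.mp hU
  have hfn : ∀ A : Matrix (Fin N) (Fin N) ℂ, frobNorm A = Real.sqrt (F A) := fun _ => rfl
  have hF0 : 0 < F L₀ := F_pos L₀ hL₀
  set S := ∑ d ∈ Finset.range (D + 1), M U L₀ d with hS
  have hc : cesaroAvg U L₀ D = (((((D : ℝ) + 1)⁻¹ : ℝ)) : ℂ) • S := by
    unfold cesaroAvg
    push_cast
    rfl
  have hDpos : (0 : ℝ) < D := by exact_mod_cast hD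
  have hge : ((D : ℝ) + 1) ^ 2 * (lam * F L₀) ≤ F S := by
    refine F_sum_ge U L₀ hU hHerm D _ fun d hd => ?_
    have := hmem d hd
    rwa [hfn, Real.sq_sqrt hF0.le] at this
  have hgeL : lam * F L₀ ≤ F (cesaroAvg U L₀ D) := by
    rw [hc, F_smul, inv_pow, inv_mul_eq_div, le_div_iff₀ (by positivity)]
    linarith
  have hpos : 0 < F (cesaroAvg U L₀ D) := lt_of_lt_of_le (by positivity) hgeL
  refine ⟨fun h => ?_, ?_⟩
  · rw [h] at hpos
    simp [F] at hpos
  have hcomm : F (U * cesaroAvg U L₀ D - cesaroAvg U L₀ D * U)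
      ≤ (((D : ℝ) + 1)⁻¹) ^ 2 * (4 * F L₀) := by
    rw [hc, Matrix.mul_smul, Matrix.smul_mul, ← smul_sub, F_smul, hS, comm_sum U L₀ hU,
      F_mul_unitary _ _ hU']
    refine mul_le_mul_of_nonneg_left ?_ (by positivity)
    have := F_sub_le (M U L₀ (D + 1)) (M U L₀ 0)
    rw [F_M U L₀ hU hHerm, F_M U L₀ hU hHerm] at this
    linarith
  rw [hfn, hfn]
  have h1 : Real.sqrt (F (U * cesaroAvg U L₀ D - cesaroAvg U L₀ D * U))
      ≤ ((D : ℝ) + 1)⁻¹ * (2 * Real.sqrt (F L₀)) := by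
    apply Real.sqrt_le_iff.mpr
    refine ⟨by positivity, ?_⟩
    rw [mul_pow, mul_pow, Real.sq_sqrt hF0.le]
    linarith
  have h2 : Real.sqrt lam * Real.sqrt (F L₀) ≤ Real.sqrt (F (cesaroAvg U L₀ D)) := by
    rw [← Real.sqrt_mul hlam.le]
    exact Real.sqrt_le_sqrt hgeL
  have hsl : 0 < Real.sqrt lam := Real.sqrt_pos.mpr hlam
  have hsF : 0 < Real.sqrt (F L₀) := Real.sqrt_pos.mpr hF0
  calc _ ≤ (((D : ℝ) + 1)⁻¹ * (2 * Real.sqrt (F L₀))) /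
        (2 * (Real.sqrt lam * Real.sqrt (F L₀))) := by gcongr
    _ = 1 / (Real.sqrt lam * ((D : ℝ) + 1)) := by field_simp
    _ ≤ _ := by gcongr; linarith
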